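/- Let Ω be a nonempty open subset of ℝⁿ and p ∈ ℕⁿ a multi-index. If a sequence w = (w_λ)_{λ∈ℕ} of smooth real-valued functions on Ω belongs to I_nd, i.e., there exists a closed nowhere dense set Γ ⊆ Ω such that for every x ∈ Ω \ Γ there is λ ∈ ℕ with w_μ(x) = 0 for all μ ≥ λ, then the componentwise partial derivative sequence D^p w = (D^p w_λ)_{λ∈ℕ} also belongs to I_nd. -/

import Mathlib

open Set

/-- `G` is a closed nowhere dense subset of `Om`: it is contained in `Om`, closed in the
subspace topology of `Om` (its closure meets `Om` only inside `G`), and has empty interior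
(for `G ⊆ Om` with `Om` open, the interior relative to `Om` coincides with the interior). -/
def ClosedNwdIn {n : ℕ} (G Om : Set (Fin n → ℝ)) : Prop :=
  G ⊆ Om ∧ closure G ∩ Om ⊆ G ∧ interior G = ∅

/-- `S` is meagre (of first Baire category) in `Om`: it is contained in a countable union
of closed nowhere dense subsets of `Om`. -/
def MeagreIn {n : ℕ} (S Om : Set (Fin n → ℝ)) : Prop :=
  S ⊆ Om ∧ ∃ C : ℕ → Set (Fin n → ℝ), (∀ k, ClosedNwdIn (C k) Om) ∧ S ⊆ ⋃ k, C k

/-- The set `I_nd` of sequences of smooth real-valued functions on `Om` that vanish eventually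
at every point outside some closed nowhere dense subset of `Om`. -/
def IndSeq (n : ℕ) (Om : Set (Fin n → ℝ)) : Set (ℕ → (Fin n → ℝ) → ℝ) :=
  {w | (∀ l, ContDiffOn ℝ (⊤ : ℕ∞) (w l) Om) ∧
    ∃ G : Set (Fin n → ℝ), ClosedNwdIn G Om ∧
      ∀ x ∈ Om \ G, ∃ l : ℕ, ∀ m : ℕ, l ≤ m → w m x = 0}

/-- The partial derivative of `f` in the `i`-th coordinate direction. -/
noncomputable def pderivI {n : ℕ} (i : Fin n) (f : (Fin n → ℝ) → ℝ) : (Fin n → ℝ) → ℝ :=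
  fun x => fderiv ℝ f x (Pi.single i 1)

/-- The partial derivative `D^p` of order given by the multi-index `p ∈ ℕⁿ`: the `i`-th
partial derivative is applied `p i` times, for each `i`. -/
noncomputable def Dmulti {n : ℕ} (p : Fin n → ℕ) (f : (Fin n → ℝ) → ℝ) : (Fin n → ℝ) → ℝ :=
  Fin.foldr n (fun i g => (pderivI i)^[p i] g) f

/-!
Call a point *good* if some neighbourhood of it carries a common index from which on all `w_μ`
vanish. By Baire's theorem the good points are dense in `Ω` as soon as the continuous functions
`w_μ` vanish eventually at every point of `Ω` outside a meagre set. Near a good point all but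
finitely many `w_μ` are identically zero, hence so are their derivatives; since good points form an
open set, the points of `Ω` that are not good make up a closed nowhere dense exceptional set for
`D^p w`.
-/

open Filter Topology

section EventualVanishing

variable {ι X E F : Type*} [LE ι]

/-- The set of points at which all members of the family `f` with index at least `l` vanish. -/
def tailZeroSet [Zero E] (f : ι → X → E) (l : ι) : Set X :=
  {x | ∀ m, l ≤ m → f m x = 0}

/-- The set of points near which the family `f` vanishes from some index on, the index being the
same throughout a neighbourhood of the point. -/
def locallyEventuallyZeroSet [TopologicalSpace X] [Zero E] (f : ι → X → E) : Set X :=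
  ⋃ l, interior (tailZeroSet f l)

theorem isOpen_locallyEventuallyZeroSet [TopologicalSpace X] [Zero E] (f : ι → X → E) :
    IsOpen (locallyEventuallyZeroSet f) :=
  isOpen_iUnion fun _ => isOpen_interior

theorem exists_forall_ge_eq_zero_of_mem_locallyEventuallyZeroSet [TopologicalSpace X] [Zero E]
    {f : ι → X → E} {x : X} (hx : x ∈ locallyEventuallyZeroSet f) :
    ∃ l, ∀ m, l ≤ m → f m x = 0 :=
  let ⟨l, hl⟩ := mem_iUnion.1 hx
  ⟨l, interior_subset hl⟩

theorem locallyEventuallyZeroSet_subset_map [TopologicalSpace X] [Zero E] [Zero F]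
    {T : (X → E) → X → F} (hT : ∀ g x, g =ᶠ[𝓝 x] 0 → T g x = 0) (f : ι → X → E) :
    locallyEventuallyZeroSet f ⊆ locallyEventuallyZeroSet fun m => T (f m) := by
  refine iUnion_mono fun l => interior_maximal (fun x hx m hm => hT _ x ?_) isOpen_interior
  filter_upwards [mem_interior_iff_mem_nhds.1 hx] with y hy using hy m hm

theorem isClosed_tailZeroSet_union_compl [TopologicalSpace X] [TopologicalSpace E] [T1Space E]
    [Zero E] {f : ι → X → E} {U : Set X} (hU : IsOpen U) (hf : ∀ m, ContinuousOn (f m) U) (l : ι) :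
    IsClosed (tailZeroSet f l ∪ Uᶜ) := by
  have hcompl : (tailZeroSet f l ∪ Uᶜ)ᶜ = ⋃ m, ⋃ (_ : l ≤ m), U ∩ f m ⁻¹' {0}ᶜ := by
    ext x
    simp only [tailZeroSet, compl_union, compl_compl, mem_inter_iff, mem_compl_iff, mem_ofPred_eq,
      mem_iUnion, mem_preimage, mem_singleton_iff]
    grind
  rw [← isOpen_compl_iff, hcompl]
  exact isOpen_biUnion fun m _ => (hf m).isOpen_inter_preimage hU isOpen_compl_singleton

theorem subset_closure_locallyEventuallyZeroSet [TopologicalSpace X] [BaireSpace X]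
    [TopologicalSpace E] [T1Space E] [Zero E] [Countable ι] [Nonempty ι]
    {f : ι → X → E} {U : Set X} (hU : IsOpen U) (hf : ∀ m, ContinuousOn (f m) U)
    (h0 : ∀ᶠ x in residual X, x ∈ U → ∃ l, ∀ m, l ≤ m → f m x = 0) :
    U ⊆ closure (locallyEventuallyZeroSet f) := by
  -- Adjoining `Uᶜ` makes the tail sets closed in `X`, so Baire's theorem applies without passing to
  -- the subspace `U`.
  obtain ⟨s, hsGδ, hsdense, hs⟩ := eventually_residual.1 h0
  have hcover : s ⊆ ⋃ l, (tailZeroSet f l ∪ Uᶜ) := fun x hx => by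
    by_cases hxU : x ∈ U
    · exact mem_iUnion.2 ((hs x hx hxU).imp fun l hl => Or.inl hl)
    · exact mem_iUnion.2 ⟨Classical.arbitrary ι, Or.inr hxU⟩
  have hdense : Dense (⋃ l, interior (tailZeroSet f l ∪ Uᶜ)) :=
    hsGδ.dense_iUnion_interior_of_closed hsdense (isClosed_tailZeroSet_union_compl hU hf) hcover
  refine (hdense.open_subset_closure_inter hU).trans (closure_mono ?_)
  rw [inter_iUnion]
  refine iUnion_mono fun l => interior_maximal ?_ (hU.inter isOpen_interior)
  exact fun x ⟨hxU, hx⟩ => (interior_subset hx).resolve_right (not_not_intro hxU)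

end EventualVanishing

section ClosedNowhereDense

variable {n : ℕ} {Om G V : Set (Fin n → ℝ)}

theorem ClosedNwdIn.isNowhereDense (hG : ClosedNwdIn G Om) (hOm : IsOpen Om) :
    IsNowhereDense G := by
  obtain ⟨hGOm, hGclosed, hGint⟩ := hG
  have hdisj : Disjoint (interior (closure G)) Om := by
    have hsub : interior (closure G) ∩ Om ⊆ interior G :=
      interior_maximal ((inter_subset_inter_left _ interior_subset).trans hGclosed)
        (isOpen_interior.inter hOm)
    exact disjoint_iff_inter_eq_empty.2 (subset_empty_iff.1 (hsub.trans hGint.subset))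
  have hdisj' : Disjoint (interior (closure G)) (closure G) :=
    (hdisj.mono_right hGOm).closure_right isOpen_interior
  exact disjoint_self.1 (hdisj'.mono_right interior_subset)

theorem closedNwdIn_sdiff_of_subset_closure (hV : IsOpen V) (hdense : Om ⊆ closure V) :
    ClosedNwdIn (Om \ V) Om := by
  refine ⟨sdiff_subset, fun x ⟨hx, hxOm⟩ => ⟨hxOm, ?_⟩, ?_⟩
  · exact closure_minimal (fun _ hy => hy.2) hV.isClosed_compl hx
  · have hdisj : Disjoint (interior (Om \ V)) (closure V) :=
      (disjoint_sdiff_left.mono_left interior_subset).closure_right isOpen_interior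
    exact disjoint_self.1 (hdisj.mono_right (interior_subset.trans (sdiff_subset.trans hdense)))

theorem mem_IndSeq_of_subset_closure {w : ℕ → (Fin n → ℝ) → ℝ}
    (hsmooth : ∀ l, ContDiffOn ℝ (⊤ : ℕ∞) (w l) Om)
    (hdense : Om ⊆ closure (locallyEventuallyZeroSet w)) : w ∈ IndSeq n Om := by
  refine ⟨hsmooth, Om \ locallyEventuallyZeroSet w,
    closedNwdIn_sdiff_of_subset_closure (isOpen_locallyEventuallyZeroSet w) hdense,
    fun x hx => exists_forall_ge_eq_zero_of_mem_locallyEventuallyZeroSet ?_⟩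
  exact not_not.1 fun hxV => hx.2 ⟨hx.1, hxV⟩

end ClosedNowhereDense

section MultiIndexDerivative

theorem mapsTo_finFoldr {α : Type*} {S : Set α} {k : ℕ} {f : Fin k → α → α}
    (hf : ∀ i, MapsTo (f i) S S) : MapsTo (Fin.foldr k f) S S := by
  intro a ha
  induction k with
  | zero => simpa only [Fin.foldr_zero] using ha
  | succ k ih =>
    rw [Fin.foldr_succ]
    exact hf 0 (ih fun i => hf i.succ)

variable {n : ℕ}

theorem mapsTo_Dmulti {S : Set ((Fin n → ℝ) → ℝ)} (hS : ∀ i, MapsTo (pderivI i) S S)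
    (p : Fin n → ℕ) : MapsTo (Dmulti p) S S :=
  mapsTo_finFoldr fun i => (hS i).iterate (p i)

theorem contDiffOn_Dmulti {Om : Set (Fin n → ℝ)} (hOm : IsOpen Om) (p : Fin n → ℕ)
    {f : (Fin n → ℝ) → ℝ} (hf : ContDiffOn ℝ (⊤ : ℕ∞) f Om) :
    ContDiffOn ℝ (⊤ : ℕ∞) (Dmulti p f) Om :=
  mapsTo_Dmulti (S := {g | ContDiffOn ℝ (⊤ : ℕ∞) g Om})
    (fun _ _ hg => (hg.fderiv_of_isOpen hOm (by norm_cast)).clm_apply contDiffOn_const) p hf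

theorem Dmulti_eventuallyEq_zero (p : Fin n → ℕ) {f : (Fin n → ℝ) → ℝ} {x : Fin n → ℝ}
    (hf : f =ᶠ[𝓝 x] 0) : Dmulti p f =ᶠ[𝓝 x] 0 := by
  refine mapsTo_Dmulti (S := {g | g =ᶠ[𝓝 x] 0}) (fun i g hg => ?_) p hf
  filter_upwards [EventuallyEq.fderiv (𝕜 := ℝ) hg] with y hy
  simp [pderivI, hy]

end MultiIndexDerivative

theorem stmt7_general {n : ℕ} {Om : Set (Fin n → ℝ)} (hOm : IsOpen Om) (p : Fin n → ℕ)
    {w : ℕ → (Fin n → ℝ) → ℝ} (hsmooth : ∀ l, ContDiffOn ℝ (⊤ : ℕ∞) (w l) Om)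
    (h0 : ∀ᶠ x in residual (Fin n → ℝ), x ∈ Om → ∃ l, ∀ m, l ≤ m → w m x = 0) :
    (fun m => Dmulti p (w m)) ∈ IndSeq n Om := by
  have hdense : Om ⊆ closure (locallyEventuallyZeroSet w) :=
    subset_closure_locallyEventuallyZeroSet hOm (fun l => (hsmooth l).continuousOn) h0
  have hlocal : locallyEventuallyZeroSet w ⊆ locallyEventuallyZeroSet fun m => Dmulti p (w m) :=
    locallyEventuallyZeroSet_subset_map
      (fun _ _ hg => (Dmulti_eventuallyEq_zero p hg).self_of_nhds) w
  exact mem_IndSeq_of_subset_closure (fun l => contDiffOn_Dmulti hOm p (hsmooth l))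
    (hdense.trans (closure_mono hlocal))

/-- If a sequence `w` of smooth functions on `Om` belongs to `I_nd` (eventual
pointwise vanishing off some closed nowhere dense set), then for any multi-index `p ∈ ℕⁿ` the
componentwise partial derivative sequence `D^p w` also belongs to `I_nd`. -/
theorem stmt7 (n : ℕ) (Om : Set (Fin n → ℝ)) (hOm : IsOpen Om) (hne : Om.Nonempty)
    (p : Fin n → ℕ) (w : ℕ → (Fin n → ℝ) → ℝ) (hw : w ∈ IndSeq n Om) :
    (fun m => Dmulti p (w m)) ∈ IndSeq n Om := by
  obtain ⟨hsmooth, G, hG, h0⟩ := hw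
  have hGc : Gᶜ ∈ residual (Fin n → ℝ) := (hG.isNowhereDense hOm).isMeagre
  exact stmt7_general hOm p hsmooth (mem_of_superset hGc fun x hxG hx => h0 x ⟨hx, hxG⟩)
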